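/- If the kneading map of a tent map satisfies Q(k) → ∞, then every folding point of the core inverse limit X′ lies in a degenerate basic arc (hence is a spiral or nasty endpoint). -/

import Mathlib

open Set Filter Topology

/-- The inverse limit `lim←(K, T)`, as the space of backward orbits. -/
abbrev InvLim (T : ℝ → ℝ) (K : Set ℝ) :=
  {x : ℕ → ℝ // (∀ n, x n ∈ K) ∧ ∀ n, T (x (n + 1)) = x n}

/-- The ω-limit set of `c` under `T`. -/
def omegaSet (T : ℝ → ℝ) (c : ℝ) : Set ℝ :=
  {y | ∃ φ : ℕ → ℕ, StrictMono φ ∧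
    Filter.Tendsto (fun n => T^[φ n] c) Filter.atTop (nhds y)}

/-- The basic arc of `x`: the closure of the set of points sharing the backward
itinerary of `x`. -/
def basicArcOf (T : ℝ → ℝ) (K : Set ℝ) (c : ℝ) (x : InvLim T K) : Set (InvLim T K) :=
  closure {y : InvLim T K | ∀ i, 1 ≤ i → y.1 i = c ∨ (c < y.1 i ↔ c < x.1 i)}

/-!
`Q k → ∞` forces `c_{S_k} → c` and hence `|D n| → 0`. A folding point `x` meets `c` in at most one
coordinate; shifting the index beyond it, we may assume that no coordinate of `x` equals `c`.

If the itinerary of `x m` agrees for `m` steps with that of the critical value `T c`, then the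
zeroth coordinate of every point with the backward itinerary of `x` lies in `D (m + 1)`. When this
happens for infinitely many `m`, all these zeroth coordinates coincide.

Otherwise a ball about `x 0` of some fixed radius `ρ` can be pulled back univalently along the whole
of `x`, because a pullback is obstructed only when it reaches `T c`. Since `x m` is a limit of the
critical orbit, a ball of radius `ρ / 2` is pulled back `m` times along a segment of the critical
orbit. Pulling it back further along that orbit, one reaches `T c` after finitely many steps, and so
finds a level `D n` with `n > m` and `ρ / 2 ≤ |D n|`, for arbitrarily large `m`. This contradicts
`|D n| → 0`.
-/

/-- `u` and `v` lie weakly on the same side of the turning point `c`. -/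
def SameSide (c u v : ℝ) : Prop := u ≤ c ∧ v ≤ c ∨ c ≤ u ∧ c ≤ v

/-- The first `m` symbols of the itineraries of `u` and `v` agree, the symbol of `c` being
compatible with both sides. -/
def SameItinerary (T : ℝ → ℝ) (c : ℝ) (m : ℕ) (u v : ℝ) : Prop :=
  ∀ j < m, SameSide c (T^[j] u) (T^[j] v)

/-- `T` is an expanding tent map with slopes `±s`, turning at `c`, whose maximum value
`T c` lies above `c`. -/
structure IsTentMap (T : ℝ → ℝ) (s c : ℝ) : Prop where
  one_lt : 1 < s
  lt_apply : c < T c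
  apply_eq : ∀ y, T y = T c - s * |y - c|

/-- The ball of radius `ρ` about `T^[m] v` has a univalent pullback along `v, …, T^[m] v`: the
ball of radius `ρ / s ^ m` about `v` does not meet `c` in its interior before time `m`. -/
def UnivalentPullback (T : ℝ → ℝ) (s c : ℝ) (m : ℕ) (v ρ : ℝ) : Prop :=
  ∀ j < m, ρ ≤ s ^ (m - j) * |T^[j] v - c|

/-- The levels `D 1, D 2, …` of the Hofbauer tower; `D 0` is unconstrained. -/
structure IsHofbauerTower (T : ℝ → ℝ) (c : ℝ) (D : ℕ → Set ℝ) : Prop where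
  one : D 1 = uIcc c (T c)
  succ_of_mem : ∀ n, 1 ≤ n → c ∈ D n → D (n + 1) = uIcc (T^[n + 1] c) (T c)
  succ_of_notMem : ∀ n, 1 ≤ n → c ∉ D n → D (n + 1) = T '' D n

/-- `S` enumerates the cutting times of the tower `D`, and `Q` is the kneading map. -/
structure IsKneadingMap (c : ℝ) (D : ℕ → Set ℝ) (S Q : ℕ → ℕ) : Prop where
  strictMono : StrictMono S
  zero : S 0 = 1
  mem_iff : ∀ n, 1 ≤ n → (c ∈ D n ↔ n ∈ range S)
  eq_add : ∀ k, 1 ≤ k → S k = S (k - 1) + S (Q k)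

section

variable {T : ℝ → ℝ} {s c u v w ρ : ℝ} {m n : ℕ} {D : ℕ → Set ℝ} {S Q : ℕ → ℕ} {K : Set ℝ}

namespace SameSide

lemma right (c u : ℝ) : SameSide c u c :=
  (le_total u c).imp (⟨·, le_rfl⟩) (⟨·, le_rfl⟩)

lemma symm (h : SameSide c u v) : SameSide c v u :=
  h.imp And.symm And.symm

lemma trans (huv : SameSide c u v) (hvw : SameSide c v w) (hv : v ≠ c) : SameSide c u w := by
  rcases huv with ⟨hu, hv₁⟩ | ⟨hu, hv₁⟩ <;> rcases hvw with ⟨hv₂, hw⟩ | ⟨hv₂, hw⟩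
  · exact Or.inl ⟨hu, hw⟩
  · exact absurd (le_antisymm hv₁ hv₂) hv
  · exact absurd (le_antisymm hv₂ hv₁) hv
  · exact Or.inr ⟨hu, hw⟩

lemma of_notMem_uIcc (h : c ∉ uIcc u v) : SameSide c u v := by
  rw [mem_uIcc] at h
  unfold SameSide
  grind

lemma of_abs_sub_le (h : |u - v| ≤ |v - c|) : SameSide c u v := by
  obtain ⟨hl, hr⟩ := abs_le.1 h
  rcases le_total v c with hv | hv
  · rw [abs_of_nonpos (by linarith)] at hl hr
    exact Or.inl ⟨by linarith, hv⟩
  · rw [abs_of_nonneg (by linarith)] at hl hr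
    exact Or.inr ⟨by linarith, hv⟩

lemma of_eq_or_lt_iff (h : u = c ∨ (c < u ↔ c < v)) : SameSide c u v := by
  unfold SameSide
  grind

lemma mem_uIcc_left (h : SameSide c u v) (hv : v ≠ c) (hu : u ∈ uIcc v w) (hc : c ∈ uIcc v w) :
    u ∈ uIcc v c := by
  rw [mem_uIcc] at *
  unfold SameSide at h
  grind

end SameSide

lemma SameItinerary.symm (h : SameItinerary T c m u v) : SameItinerary T c m v u :=
  fun j hj => (h j hj).symm

lemma SameItinerary.trans (huv : SameItinerary T c m u v) (hvw : SameItinerary T c m v w)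
    (hv : ∀ j < m, T^[j] v ≠ c) : SameItinerary T c m u w :=
  fun j hj => (huv j hj).trans (hvw j hj) (hv j hj)

namespace IsTentMap

lemma pos (hT : IsTentMap T s c) : 0 < s := one_pos.trans hT.one_lt

lemma mul_abs_sub (hT : IsTentMap T s c) (y : ℝ) : s * |y - c| = T c - T y := by
  rw [hT.apply_eq y, sub_sub_cancel]

lemma apply_le (hT : IsTentMap T s c) (y : ℝ) : T y ≤ T c :=
  sub_nonneg.1 (hT.mul_abs_sub y ▸ mul_nonneg hT.pos.le (abs_nonneg _))

lemma abs_apply_sub_apply (hT : IsTentMap T s c) (u v : ℝ) :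
    |T u - T v| = s * |(|u - c| - |v - c|)| := by
  have hsub : T u - T v = -(s * (|u - c| - |v - c|)) := by
    rw [hT.apply_eq u, hT.apply_eq v]
    ring
  rw [hsub, abs_neg, abs_mul, abs_of_pos hT.pos]

lemma abs_apply_sub_apply_le (hT : IsTentMap T s c) (u v : ℝ) : |T u - T v| ≤ s * |u - v| := by
  rw [hT.abs_apply_sub_apply]
  refine mul_le_mul_of_nonneg_left ?_ hT.pos.le
  simpa only [sub_sub_sub_cancel_right] using abs_abs_sub_abs_le_abs_sub (u - c) (v - c)

lemma abs_apply_sub_apply_of_sameSide (hT : IsTentMap T s c) (h : SameSide c u v) :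
    |T u - T v| = s * |u - v| := by
  rw [hT.abs_apply_sub_apply]
  congr 1
  rcases h with ⟨hu, hv⟩ | ⟨hu, hv⟩
  · rw [abs_of_nonpos (sub_nonpos.2 hu), abs_of_nonpos (sub_nonpos.2 hv), neg_sub, neg_sub,
      sub_sub_sub_cancel_left, abs_sub_comm]
  · rw [abs_of_nonneg (sub_nonneg.2 hu), abs_of_nonneg (sub_nonneg.2 hv),
      sub_sub_sub_cancel_right]

lemma abs_iterate_sub_iterate_le (hT : IsTentMap T s c) (u v : ℝ) (m : ℕ) :
    |T^[m] u - T^[m] v| ≤ s ^ m * |u - v| := by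
  induction m with
  | zero => simp
  | succ m ih =>
    calc |T^[m + 1] u - T^[m + 1] v| ≤ s * |T^[m] u - T^[m] v| := by
          simpa only [Function.iterate_succ_apply'] using hT.abs_apply_sub_apply_le _ _
      _ ≤ s * (s ^ m * |u - v|) := mul_le_mul_of_nonneg_left ih hT.pos.le
      _ = s ^ (m + 1) * |u - v| := by ring

lemma pow_sub_mul_abs_iterate_sub_iterate_le (hT : IsTentMap T s c) {j : ℕ} (hj : j ≤ m)
    (u v : ℝ) : s ^ (m - j) * |T^[j] u - T^[j] v| ≤ s ^ m * |u - v| :=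
  calc s ^ (m - j) * |T^[j] u - T^[j] v|
      ≤ s ^ (m - j) * (s ^ j * |u - v|) :=
        mul_le_mul_of_nonneg_left (hT.abs_iterate_sub_iterate_le u v j) (pow_pos hT.pos _).le
    _ = s ^ m * |u - v| := by rw [← mul_assoc, ← pow_add, Nat.sub_add_cancel hj]

lemma abs_iterate_sub_iterate_of_sameItinerary (hT : IsTentMap T s c)
    (h : SameItinerary T c m u v) : |T^[m] u - T^[m] v| = s ^ m * |u - v| := by
  induction m with
  | zero => simp
  | succ m ih =>
    rw [Function.iterate_succ_apply', Function.iterate_succ_apply',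
      hT.abs_apply_sub_apply_of_sameSide (h m m.lt_succ_self),
      ih fun j hj => h j (hj.trans m.lt_succ_self), pow_succ', mul_assoc]

lemma continuous (hT : IsTentMap T s c) : Continuous T := by
  rw [funext hT.apply_eq]
  fun_prop

lemma monotoneOn_Iic (hT : IsTentMap T s c) : MonotoneOn T (Iic c) := by
  intro u hu v hv huv
  rw [hT.apply_eq u, hT.apply_eq v, abs_of_nonpos (sub_nonpos.2 hu),
    abs_of_nonpos (sub_nonpos.2 hv)]
  nlinarith [hT.pos]

lemma antitoneOn_Ici (hT : IsTentMap T s c) : AntitoneOn T (Ici c) := by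
  intro u hu v hv huv
  rw [hT.apply_eq u, hT.apply_eq v, abs_of_nonneg (sub_nonneg.2 (mem_Ici.1 hu)),
    abs_of_nonneg (sub_nonneg.2 (mem_Ici.1 hv))]
  nlinarith [hT.pos]

lemma image_uIcc (hT : IsTentMap T s c) (h : SameSide c u v) :
    T '' uIcc u v = uIcc (T u) (T v) := by
  rcases h with ⟨hu, hv⟩ | ⟨hu, hv⟩
  · exact hT.continuous.continuousOn.image_uIcc_of_monotoneOn
      (hT.monotoneOn_Iic.mono (ordConnected_Iic.uIcc_subset hu hv))
  · exact hT.continuous.continuousOn.image_uIcc_of_antitoneOn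
      (hT.antitoneOn_Ici.mono (ordConnected_Ici.uIcc_subset hu hv))

end IsTentMap

namespace UnivalentPullback

lemma mono {ρ' : ℝ} (h : UnivalentPullback T s c m v ρ) (hρ : ρ' ≤ ρ) :
    UnivalentPullback T s c m v ρ' :=
  fun j hj => hρ.trans (h j hj)

lemma succ_iff : UnivalentPullback T s c (m + 1) v ρ ↔
    ρ ≤ s ^ (m + 1) * |v - c| ∧ UnivalentPullback T s c m (T v) ρ := by
  simp only [UnivalentPullback, Nat.forall_lt_succ_left, Nat.sub_zero, Nat.add_sub_add_right,
    Function.iterate_succ_apply, Function.iterate_zero_apply]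

lemma ne_critical (h : UnivalentPullback T s c m v ρ) (hρ : 0 < ρ) : ∀ j < m, T^[j] v ≠ c := by
  rintro j hj hc
  have := h j hj
  rw [hc, sub_self, abs_zero, mul_zero] at this
  exact this.not_gt hρ

lemma exists_pos (hs : 0 < s) (h : ∀ j < m, T^[j] v ≠ c) :
    ∃ ρ > 0, UnivalentPullback T s c m v ρ := by
  induction m generalizing v with
  | zero => exact ⟨1, one_pos, fun j hj => absurd hj j.not_lt_zero⟩
  | succ m ih =>
    obtain ⟨hv, hTv⟩ := Nat.forall_lt_succ_left.1 h
    obtain ⟨ρ, hρ, hpull⟩ := ih hTv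
    have hdist : 0 < |v - c| := abs_pos.2 (sub_ne_zero.2 hv)
    exact ⟨min (s ^ (m + 1) * |v - c|) ρ, lt_min (mul_pos (pow_pos hs _) hdist) hρ,
      succ_iff.2 ⟨min_le_left _ _, hpull.mono (min_le_right _ _)⟩⟩

lemma succ (hT : IsTentMap T s c) (h : UnivalentPullback T s c m (T v) ρ)
    (hv : ρ ≤ s ^ m * (T c - T v)) : UnivalentPullback T s c (m + 1) v ρ :=
  succ_iff.2 ⟨by rwa [pow_succ, mul_assoc, hT.mul_abs_sub], h⟩

lemma sameItinerary (hT : IsTentMap T s c) (h : UnivalentPullback T s c m v ρ)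
    (hu : s ^ m * |u - v| ≤ ρ) : SameItinerary T c m u v := fun j hj =>
  SameSide.of_abs_sub_le <| le_of_mul_le_mul_left
    ((hT.pow_sub_mul_abs_iterate_sub_iterate_le hj.le u v).trans (hu.trans (h j hj)))
    (pow_pos hT.pos _)

lemma of_close {ε : ℝ} (hT : IsTentMap T s c)
    (h : UnivalentPullback T s c m v ρ) (hu : s ^ m * |v - u| ≤ ε) :
    UnivalentPullback T s c m u (ρ - ε) := by
  intro j hj
  have hclose := (hT.pow_sub_mul_abs_iterate_sub_iterate_le hj.le v u).trans hu
  have htriangle := mul_le_mul_of_nonneg_left (abs_sub_le (T^[j] v) (T^[j] u) c)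
    (pow_pos hT.pos (m - j)).le
  linarith [h j hj]

end UnivalentPullback

lemma diam_uIcc (a b : ℝ) : Metric.diam (uIcc a b) = |a - b| := by
  rw [uIcc, Real.diam_Icc inf_le_sup, sup_sub_inf_eq_abs_sub, abs_sub_comm]

namespace IsHofbauerTower

lemma exists_eq_uIcc (hT : IsTentMap T s c) (hD : IsHofbauerTower T c D) (hn : 1 ≤ n) :
    ∃ e, D n = uIcc (T^[n] c) e := by
  induction n, hn using Nat.le_induction with
  | base => exact ⟨c, hD.one.trans (uIcc_comm _ _)⟩
  | succ n hn ih =>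
    by_cases hc : c ∈ D n
    · exact ⟨_, hD.succ_of_mem n hn hc⟩
    · obtain ⟨e, he⟩ := ih
      exact ⟨T e, by rw [hD.succ_of_notMem n hn hc, he,
        hT.image_uIcc (.of_notMem_uIcc (he ▸ hc)), Function.iterate_succ_apply']⟩

lemma dist_le_diam (hT : IsTentMap T s c) (hD : IsHofbauerTower T c D) (hn : 1 ≤ n)
    (hu : u ∈ D n) (hv : v ∈ D n) : dist u v ≤ Metric.diam (D n) := by
  obtain ⟨e, he⟩ := hD.exists_eq_uIcc hT hn
  exact Metric.dist_le_diam_of_mem (he ▸ isCompact_uIcc.isBounded) hu hv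

lemma iterate_mem (hT : IsTentMap T s c) (hD : IsHofbauerTower T c D)
    (hnc : ∀ n, 1 ≤ n → T^[n] c ≠ c) (hm : 1 ≤ m) (hu : u ≤ T c)
    (h : SameItinerary T c m u (T c)) : T^[m] u ∈ D (m + 1) := by
  suffices hmem : ∀ j ≤ m, T^[j] u ∈ D (j + 1) from hmem m le_rfl
  intro j hj
  induction j with
  | zero =>
    rw [zero_add, hD.one, uIcc_of_le hT.lt_apply.le]
    exact ⟨(h 0 hm).elim (fun hc => absurd hc.2 hT.lt_apply.not_ge) And.left, hu⟩
  | succ j ih =>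
    have hmem := ih (Nat.le_of_succ_le hj)
    rw [Function.iterate_succ_apply']
    by_cases hc : c ∈ D (j + 1)
    · obtain ⟨e, he⟩ := hD.exists_eq_uIcc hT j.succ_pos
      rw [he] at hmem hc
      have hside : SameSide c (T^[j] u) (T^[j + 1] c) := h j hj
      have hhalf := hside.mem_uIcc_left (hnc _ j.succ_pos) hmem hc
      rw [hD.succ_of_mem _ j.succ_pos (he ▸ hc), Function.iterate_succ_apply' T (j + 1) c,
        ← hT.image_uIcc (.right _ _)]
      exact mem_image_of_mem T hhalf
    · rw [hD.succ_of_notMem _ j.succ_pos hc]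
      exact mem_image_of_mem T hmem

lemma eq_uIcc_and_abs_sub_of_forall_notMem (hT : IsTentMap T s c) (hD : IsHofbauerTower T c D)
    (hn : 1 ≤ n) (hcn : c ∈ D n) {i : ℕ} (hi : 1 ≤ i)
    (hcut : ∀ j, 1 ≤ j → j < i → c ∉ D (n + j)) :
    D (n + i) = uIcc (T^[n + i] c) (T^[i] c) ∧
      |T^[n + i] c - T^[i] c| = s ^ i * |T^[n] c - c| := by
  induction i, hi using Nat.le_induction with
  | base =>
    refine ⟨hD.succ_of_mem n hn hcn, ?_⟩
    rw [Function.iterate_succ_apply', Function.iterate_one, pow_one]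
    exact hT.abs_apply_sub_apply_of_sameSide (.right _ _)
  | succ i hi ih =>
    obtain ⟨heq, habs⟩ := ih fun j hj hji => hcut j hj (hji.trans i.lt_succ_self)
    have hc : c ∉ D (n + i) := hcut i hi i.lt_succ_self
    have hside : SameSide c (T^[n + i] c) (T^[i] c) := .of_notMem_uIcc (heq ▸ hc)
    rw [← add_assoc, hD.succ_of_notMem _ (by omega) hc, heq, hT.image_uIcc hside,
      Function.iterate_succ_apply', Function.iterate_succ_apply',
      hT.abs_apply_sub_apply_of_sameSide hside, habs, pow_succ', mul_assoc]
    exact ⟨rfl, rfl⟩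

/-- A ball about `v` that reaches the maximum `T c` contains a one-sided neighbourhood of `T c` of
the same radius, which is mapped into the tower. -/
lemma le_diam_of_univalentPullback (hT : IsTentMap T s c) (hD : IsHofbauerTower T c D)
    (hnc : ∀ n, 1 ≤ n → T^[n] c ≠ c) (hm : 1 ≤ m) (hρ : 0 < ρ)
    (h : UnivalentPullback T s c m v ρ) (hv : v ≤ T c) (hclose : s ^ m * (T c - v) ≤ ρ) :
    ρ ≤ Metric.diam (D (m + 1)) := by
  have hsm : 0 < s ^ m := pow_pos hT.pos m
  set δ := ρ / s ^ m
  have hδ : 0 < δ := div_pos hρ hsm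
  have hδρ : s ^ m * δ = ρ := mul_div_cancel₀ ρ hsm.ne'
  have hcδ : T c - v ≤ δ := le_of_mul_le_mul_left (hclose.trans_eq hδρ.symm) hsm
  have hleft : SameItinerary T c m (T c - δ) v := by
    refine h.sameItinerary hT (hδρ ▸ mul_le_mul_of_nonneg_left ?_ hsm.le)
    exact abs_le.2 ⟨by linarith, by linarith⟩
  have hright : SameItinerary T c m (T c) v :=
    h.sameItinerary hT (by rwa [abs_of_nonneg (sub_nonneg.2 hv)])
  have hends := hleft.trans hright.symm (h.ne_critical hρ)
  have hdist : dist (T^[m] (T c - δ)) (T^[m] (T c)) = ρ := by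
    rw [Real.dist_eq, hT.abs_iterate_sub_iterate_of_sameItinerary hends, sub_sub_cancel_left,
      abs_neg, abs_of_pos hδ, hδρ]
  rw [← hdist]
  exact hD.dist_le_diam hT m.succ_pos (hD.iterate_mem hT hnc hm (by linarith) hends)
    (hD.iterate_mem hT hnc hm le_rfl (hright.trans hright.symm (h.ne_critical hρ)))

/-- The pullback is continued along the critical orbit until it reaches `T c`, at the latest at
`T c` itself. -/
lemma exists_le_diam_of_univalentPullback (hT : IsTentMap T s c) (hD : IsHofbauerTower T c D)
    (hnc : ∀ n, 1 ≤ n → T^[n] c ≠ c) (hm : 1 ≤ m) (hρ : 0 < ρ) {k : ℕ}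
    (h : UnivalentPullback T s c m (T^[k] (T c)) ρ) : ∃ n > m, ρ ≤ Metric.diam (D n) := by
  induction k generalizing m with
  | zero =>
    exact ⟨m + 1, m.lt_succ_self, hD.le_diam_of_univalentPullback hT hnc hm hρ h le_rfl
      (by simpa using hρ.le)⟩
  | succ k ih =>
    rw [Function.iterate_succ_apply'] at h
    rcases le_total ρ (s ^ m * (T c - T (T^[k] (T c)))) with hfar | hclose
    · obtain ⟨n, hn, hle⟩ := ih m.succ_pos (h.succ hT hfar)
      exact ⟨n, m.lt_succ_self.trans hn, hle⟩
    · exact ⟨m + 1, m.lt_succ_self,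
        hD.le_diam_of_univalentPullback hT hnc hm hρ h (hT.apply_le _) hclose⟩

end IsHofbauerTower

namespace IsKneadingMap

lemma one_le (hS : IsKneadingMap c D S Q) (k : ℕ) : 1 ≤ S k :=
  hS.zero ▸ hS.strictMono.monotone k.zero_le

lemma succ_eq_add (hS : IsKneadingMap c D S Q) (k : ℕ) : S (k + 1) = S k + S (Q (k + 1)) :=
  hS.eq_add (k + 1) k.succ_pos

lemma notMem_of_lt_of_lt (hS : IsKneadingMap c D S Q) {k : ℕ} (hk : S k < n) (hn : n < S (k + 1)) :
    c ∉ D n := by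
  rw [hS.mem_iff n ((hS.one_le k).trans hk.le)]
  rintro ⟨l, rfl⟩
  have := hS.strictMono.lt_iff_lt.1 hk
  have := hS.strictMono.lt_iff_lt.1 hn
  omega

lemma eq_uIcc_and_abs_sub (hT : IsTentMap T s c) (hD : IsHofbauerTower T c D)
    (hS : IsKneadingMap c D S Q) {k i : ℕ} (hi : 1 ≤ i) (hik : i ≤ S (Q (k + 1))) :
    D (S k + i) = uIcc (T^[S k + i] c) (T^[i] c) ∧
      |T^[S k + i] c - T^[i] c| = s ^ i * |T^[S k] c - c| := by
  have hcut : c ∈ D (S k) := (hS.mem_iff _ (hS.one_le k)).2 ⟨k, rfl⟩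
  have hk := hS.succ_eq_add k
  exact hD.eq_uIcc_and_abs_sub_of_forall_notMem hT (hS.one_le k) hcut hi
    fun j hj hji => hS.notMem_of_lt_of_lt (k := k) (by omega) (by omega)

lemma pow_mul_abs_iterate_sub_eq (hT : IsTentMap T s c) (hD : IsHofbauerTower T c D)
    (hS : IsKneadingMap c D S Q) (k : ℕ) :
    s ^ S (Q (k + 1)) * |T^[S k] c - c| = |T^[S (k + 1)] c - T^[S (Q (k + 1))] c| := by
  rw [hS.succ_eq_add, (hS.eq_uIcc_and_abs_sub hT hD (hS.one_le _) le_rfl).2]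

lemma tendsto_cuttingTime_succ (hS : IsKneadingMap c D S Q) (hQ : Tendsto Q atTop atTop) :
    Tendsto (fun k => S (Q (k + 1))) atTop atTop :=
  hS.strictMono.tendsto_atTop.comp (hQ.comp (tendsto_add_atTop_nat 1))

lemma tendsto_abs_iterate_sub (hT : IsTentMap T s c) (hD : IsHofbauerTower T c D)
    (hS : IsKneadingMap c D S Q) (hQ : Tendsto Q atTop atTop)
    (hbdd : Bornology.IsBounded (range fun n => T^[n] c)) :
    Tendsto (fun k => |T^[S k] c - c|) atTop (𝓝 0) := by
  set B := Metric.diam (range fun n => T^[n] c)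
  have hle (k : ℕ) : |T^[S k] c - c| ≤ B / s ^ S (Q (k + 1)) := by
    rw [le_div_iff₀' (pow_pos hT.pos _), hS.pow_mul_abs_iterate_sub_eq hT hD]
    exact Metric.dist_le_diam_of_mem hbdd ⟨_, rfl⟩ ⟨_, rfl⟩
  refine squeeze_zero (fun k => abs_nonneg _) hle (Tendsto.const_div_atTop ?_ B)
  exact (tendsto_pow_atTop_atTop_of_one_lt hT.one_lt).comp (hS.tendsto_cuttingTime_succ hQ)

lemma diam_le (hT : IsTentMap T s c) (hD : IsHofbauerTower T c D) (hS : IsKneadingMap c D S Q)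
    {k : ℕ} (hk : S k < n) (hn : n ≤ S (k + 1)) :
    Metric.diam (D n) ≤ |T^[S (k + 1)] c - c| + |T^[S (Q (k + 1))] c - c| := by
  obtain ⟨i, rfl⟩ := Nat.exists_eq_add_of_le hk.le
  have hi : 1 ≤ i := by omega
  have hik : i ≤ S (Q (k + 1)) := by rw [hS.succ_eq_add] at hn; omega
  obtain ⟨heq, habs⟩ := hS.eq_uIcc_and_abs_sub hT hD hi hik
  calc Metric.diam (D (S k + i)) = s ^ i * |T^[S k] c - c| := by rw [heq, diam_uIcc, habs]
    _ ≤ s ^ S (Q (k + 1)) * |T^[S k] c - c| :=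
        mul_le_mul_of_nonneg_right (pow_le_pow_right₀ hT.one_lt.le hik) (abs_nonneg _)
    _ = |T^[S (k + 1)] c - T^[S (Q (k + 1))] c| := hS.pow_mul_abs_iterate_sub_eq hT hD k
    _ ≤ |T^[S (k + 1)] c - c| + |T^[S (Q (k + 1))] c - c| :=
        (abs_sub_le _ c _).trans_eq (by rw [abs_sub_comm c])

lemma tendsto_diam (hT : IsTentMap T s c) (hD : IsHofbauerTower T c D)
    (hS : IsKneadingMap c D S Q) (hQ : Tendsto Q atTop atTop)
    (hbdd : Bornology.IsBounded (range fun n => T^[n] c)) :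
    Tendsto (fun n => Metric.diam (D n)) atTop (𝓝 0) := by
  have hcut := hS.tendsto_abs_iterate_sub hT hD hQ hbdd
  have hsucc : Tendsto (fun k : ℕ => k + 1) atTop atTop := tendsto_add_atTop_nat 1
  have hbound := (hcut.comp hsucc).add (hcut.comp (hQ.comp hsucc))
  rw [add_zero] at hbound
  refine tendsto_order.2 ⟨fun a ha => .of_forall fun n => ha.trans_le Metric.diam_nonneg,
    fun ε hε => ?_⟩
  obtain ⟨M, hM⟩ := eventually_atTop.1 (hbound.eventually_lt_const hε)
  filter_upwards [eventually_gt_atTop (S M)] with n hn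
  obtain ⟨k, hk, hkn⟩ := hS.strictMono.exists_between_of_tendsto_atTop
    hS.strictMono.tendsto_atTop ((hS.strictMono.monotone M.zero_le).trans_lt hn)
  have hMk : M ≤ k := Nat.lt_succ_iff.1 (hS.strictMono.lt_iff_lt.1 (hn.trans_le hkn))
  exact (hS.diam_le hT hD hk hkn).trans_lt (hM k hMk)

end IsKneadingMap

namespace InvLim

lemma iterate_apply_add (x : InvLim T K) (n j : ℕ) : T^[j] (x.1 (n + j)) = x.1 n := by
  induction j with
  | zero => rfl
  | succ j ih => rw [Function.iterate_succ_apply, ← add_assoc, x.2.2, ih]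

lemma iterate_apply (x : InvLim T K) (n : ℕ) {j : ℕ} (hj : j ≤ m) :
    T^[j] (x.1 (n + m)) = x.1 (n + (m - j)) := by
  rw [← x.iterate_apply_add (n + (m - j)) j, add_assoc, Nat.sub_add_cancel hj]

lemma apply_le (hT : IsTentMap T s c) (x : InvLim T K) (n : ℕ) : x.1 n ≤ T c :=
  x.2.2 n ▸ hT.apply_le _

lemma exists_forall_gt_ne (hnc : ∀ n, 1 ≤ n → T^[n] c ≠ c) (x : InvLim T K) :
    ∃ l, ∀ n > l, x.1 n ≠ c := by
  by_cases h : ∃ l, x.1 l = c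
  · obtain ⟨l, hl⟩ := h
    refine ⟨l, fun n hn hxn => hnc (n - l) (by omega) ?_⟩
    have := x.iterate_apply_add l (n - l)
    rwa [Nat.add_sub_cancel' hn.le, hxn, hl] at this
  · exact ⟨0, fun n _ hxn => h ⟨n, hxn⟩⟩

lemma iterate_ne {x : InvLim T K} {l : ℕ} (hx : ∀ n > l, x.1 n ≠ c) :
    ∀ j < m, T^[j] (x.1 (l + m)) ≠ c := by
  intro j hj
  rw [x.iterate_apply l hj.le]
  exact hx _ (by omega)

lemma apply_mem_of_sameItinerary (hT : IsTentMap T s c) (hD : IsHofbauerTower T c D)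
    (hnc : ∀ n, 1 ≤ n → T^[n] c ≠ c) (hm : 1 ≤ m) (x : InvLim T K) {l : ℕ}
    (h : SameItinerary T c m (x.1 (l + m)) (T c)) : x.1 l ∈ D (m + 1) :=
  x.iterate_apply_add l m ▸ hD.iterate_mem hT hnc hm (apply_le hT x _) h

lemma apply_eq_of_frequently_sameItinerary (hT : IsTentMap T s c) (hD : IsHofbauerTower T c D)
    (hnc : ∀ n, 1 ≤ n → T^[n] c ≠ c) (hdiam : Tendsto (fun n => Metric.diam (D n)) atTop (𝓝 0))
    {x z : InvLim T K} {l : ℕ} (hx : ∀ n > l, x.1 n ≠ c)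
    (hfreq : ∃ᶠ m in atTop, SameItinerary T c m (x.1 (l + m)) (T c))
    (hz : ∀ n > l, SameSide c (z.1 n) (x.1 n)) : z.1 l = x.1 l := by
  by_contra hne
  have hsmall : ∀ᶠ m in atTop, Metric.diam (D (m + 1)) < dist (z.1 l) (x.1 l) :=
    (tendsto_add_atTop_nat 1).eventually (hdiam.eventually_lt_const (dist_pos.2 hne))
  obtain ⟨m, hxm, hlt, hm⟩ :=
    (hfreq.and_eventually (hsmall.and (eventually_ge_atTop 1))).exists
  have hzx : SameItinerary T c m (z.1 (l + m)) (x.1 (l + m)) := by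
    intro j hj
    rw [x.iterate_apply l hj.le, z.iterate_apply l hj.le]
    exact hz _ (by omega)
  exact hlt.not_ge <| hD.dist_le_diam hT m.succ_pos
    (z.apply_mem_of_sameItinerary hT hD hnc hm (hzx.trans hxm (iterate_ne hx)))
    (x.apply_mem_of_sameItinerary hT hD hnc hm hxm)

lemma exists_univalentPullback (hT : IsTentMap T s c) {x : InvLim T K} {l N : ℕ}
    (hx : ∀ n > l, x.1 n ≠ c) (hN : ∀ m ≥ N, ¬SameItinerary T c m (x.1 (l + m)) (T c)) :
    ∃ ρ > 0, ∀ m ≥ N, UnivalentPullback T s c m (x.1 (l + m)) ρ := by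
  obtain ⟨ρ, hρ, hbase⟩ := UnivalentPullback.exists_pos (m := N) hT.pos (iterate_ne hx)
  refine ⟨ρ, hρ, fun m hm => ?_⟩
  induction m, hm using Nat.le_induction with
  | base => exact hbase
  | succ m hm ih =>
    rw [← x.2.2 (l + m)] at ih
    refine ih.succ hT (le_of_not_ge fun hclose => hN m hm ?_)
    rw [← x.2.2 (l + m)]
    exact (ih.sameItinerary hT
      (by rwa [abs_of_nonneg (sub_nonneg.2 (hT.apply_le _))])).symm

lemma frequently_sameItinerary (hT : IsTentMap T s c) (hD : IsHofbauerTower T c D)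
    (hnc : ∀ n, 1 ≤ n → T^[n] c ≠ c) (hdiam : Tendsto (fun n => Metric.diam (D n)) atTop (𝓝 0))
    {x : InvLim T K} {l : ℕ} (hx : ∀ n > l, x.1 n ≠ c)
    (hclosure : ∀ n, x.1 n ∈ closure (range fun k => T^[k] (T c))) :
    ∃ᶠ m in atTop, SameItinerary T c m (x.1 (l + m)) (T c) := by
  intro hnone
  obtain ⟨N, hN⟩ := eventually_atTop.1 hnone
  obtain ⟨ρ, hρ, hpull⟩ := exists_univalentPullback hT hx hN
  obtain ⟨M, hM⟩ := eventually_atTop.1 (hdiam.eventually_lt_const (half_pos hρ))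
  obtain ⟨m, hNm, hMm, hm⟩ : ∃ m, N ≤ m ∧ M ≤ m ∧ 1 ≤ m := ⟨N + M + 1, by omega⟩
  have hsm : 0 < s ^ m := pow_pos hT.pos m
  obtain ⟨k, hk⟩ := Metric.mem_closure_range_iff.1 (hclosure (l + m)) (ρ / 2 / s ^ m)
    (by positivity)
  have hcrit : UnivalentPullback T s c m (T^[k] (T c)) (ρ - ρ / 2) :=
    (hpull m hNm).of_close hT ((lt_div_iff₀' hsm).1 hk).le
  rw [sub_half] at hcrit
  obtain ⟨n, hn, hle⟩ := hD.exists_le_diam_of_univalentPullback hT hnc hm (half_pos hρ) hcrit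
  exact (hM n (hMm.trans hn.le)).not_ge hle

end InvLim

lemma omegaSet_subset_closure_range : omegaSet T c ⊆ closure (range fun k => T^[k] (T c)) := by
  rintro y ⟨φ, hφ, hlim⟩
  refine mem_closure_of_tendsto hlim ?_
  filter_upwards [eventually_ge_atTop 1] with n hn
  obtain ⟨k, hk⟩ := Nat.exists_eq_add_of_le' (hn.trans hφ.le_apply)
  exact ⟨k, by rw [hk, Function.iterate_succ_apply]⟩

/-- The tent map `T_s` of the unit interval, extended to the line. -/
def tentMap (s x : ℝ) : ℝ := min (s * x) (s * (1 - x))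

lemma isTentMap_tentMap (hs : 1 < s) : IsTentMap (tentMap s) s (1 / 2) := by
  have hmax : tentMap s (1 / 2) = s / 2 := by
    rw [tentMap, sub_half, min_self, mul_one_div]
  refine ⟨hs, by linarith, fun y => ?_⟩
  rw [hmax, tentMap, ← mul_min_of_nonneg _ _ (one_pos.trans hs).le]
  rcases le_total y (1 / 2) with hy | hy
  · rw [min_eq_left (by linarith), abs_of_nonpos (by linarith)]
    ring
  · rw [min_eq_right (by linarith), abs_of_nonneg (by linarith)]
    ring

lemma mapsTo_tentMap (hs : s ∈ Icc 0 2) : MapsTo (tentMap s) (Icc 0 1) (Icc 0 1) := by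
  rintro y ⟨hy₀, hy₁⟩
  refine ⟨le_min (mul_nonneg hs.1 hy₀) (mul_nonneg hs.1 (sub_nonneg.2 hy₁)), ?_⟩
  rcases le_total (s * y) 1 with hsy | hsy
  · exact min_le_of_left_le hsy
  · exact min_le_of_right_le (by linarith [hs.2])

lemma isBounded_range_iterate_tentMap (hs : s ∈ Icc 0 2) :
    Bornology.IsBounded (range fun n => (tentMap s)^[n] (1 / 2)) :=
  (Metric.isBounded_Icc 0 1).subset <| range_subset_iff.2 fun n =>
    (mapsTo_tentMap hs).iterate n ⟨by norm_num, by norm_num⟩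

theorem stmt15_general (hT : IsTentMap T s c) (hnc : ∀ n, 1 ≤ n → T^[n] c ≠ c)
    (hbdd : Bornology.IsBounded (range fun n => T^[n] c)) (hD : IsHofbauerTower T c D)
    (hS : IsKneadingMap c D S Q) (hQ : Tendsto Q atTop atTop) (x : InvLim T K)
    (hx : ∀ n, x.1 n ∈ omegaSet T c) : (basicArcOf T K c x).Subsingleton := by
  have hdiam := hS.tendsto_diam hT hD hQ hbdd
  obtain ⟨L, hL⟩ := x.exists_forall_gt_ne hnc
  have hsub : {y : InvLim T K | ∀ i, 1 ≤ i → y.1 i = c ∨ (c < y.1 i ↔ c < x.1 i)} ⊆ {x} := by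
    refine fun z hz => Subtype.ext (funext fun n => ?_)
    have hne : ∀ i > n + L, x.1 i ≠ c := fun i hi => hL i (by omega)
    have hfreq := InvLim.frequently_sameItinerary hT hD hnc hdiam hne
      fun i => omegaSet_subset_closure_range (hx i)
    have heq := InvLim.apply_eq_of_frequently_sameItinerary hT hD hnc hdiam hne hfreq
      fun i hi => .of_eq_or_lt_iff (hz i (by omega))
    rw [← z.iterate_apply_add n L, heq, x.iterate_apply_add]
  exact subsingleton_singleton.anti (closure_minimal hsub isClosed_singleton)

end

/-- If the kneading map of a tent map satisfies `Q(k) → ∞`, then every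
folding point of the core inverse limit `X′` lies in a degenerate basic arc (hence is a
spiral or nasty endpoint). -/
theorem stmt15 (s : ℝ) (hs : s ∈ Set.Ioc (Real.sqrt 2) 2) (T : ℝ → ℝ)
    (hT : ∀ x, T x = min (s * x) (s * (1 - x))) (c : ℝ) (hc : c = 1/2)
    (hnc : ∀ n, 1 ≤ n → T^[n] c ≠ c)
    (hinf : Function.Injective fun n : ℕ => T^[n] c)
    (D : ℕ → Set ℝ)
    (hD1 : D 1 = Set.uIcc c (T c))
    (hDcut : ∀ n, 1 ≤ n → c ∈ D n → D (n + 1) = Set.uIcc (T^[n+1] c) (T c))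
    (hDnot : ∀ n, 1 ≤ n → c ∉ D n → D (n + 1) = T '' D n)
    (S : ℕ → ℕ) (hS : StrictMono S) (hS0 : S 0 = 1)
    (hSrange : ∀ n, 1 ≤ n → (c ∈ D n ↔ n ∈ Set.range S))
    (Q : ℕ → ℕ) (hQ : ∀ k, 1 ≤ k → S k = S (k - 1) + S (Q k))
    (hQinf : Filter.Tendsto Q Filter.atTop Filter.atTop)
    (K : Set ℝ) (hK : K = Set.Icc (T^[2] c) (T c))
    (F : Set (InvLim T K))
    (hF : F = {x : InvLim T K | ∀ n, x.1 n ∈ omegaSet T c}) :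
    ∀ x ∈ F, (basicArcOf T K c x).Subsingleton := by
  obtain rfl : T = tentMap s := funext hT
  have hs₁ : 1 < s := (Real.lt_sqrt zero_le_one).2 (by norm_num) |>.trans hs.1
  subst hc hF
  exact stmt15_general (isTentMap_tentMap hs₁) hnc
    (isBounded_range_iterate_tentMap ⟨by linarith, hs.2⟩) ⟨hD1, hDcut, hDnot⟩
    ⟨hS, hS0, hSrange, hQ⟩ hQinf
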